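/- The operators D₁⁻, …, D_{n−1}⁻ on K = 𝕜(x₁,…,xₙ) satisfy the Coxeter relations of the symmetric group Sₙ: Dᵢ⁻∘Dᵢ⁻ = id_K for all i; Dᵢ⁻∘Dⱼ⁻ = Dⱼ⁻∘Dᵢ⁻ whenever |i − j| ≥ 2; and Dᵢ⁻∘D_{i+1}⁻∘Dᵢ⁻ = D_{i+1}⁻∘Dᵢ⁻∘D_{i+1}⁻ for all 1 ≤ i ≤ n−2. Consequently there is a unique action of Sₙ on K by 𝕜-linear automorphisms in which the simple transposition (i, i+1) acts as Dᵢ⁻ (the '⊖-action' of Sₙ on K). -/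

import Mathlib

noncomputable section

open MvPolynomial

/-- The `i`-th variable `xᵢ`, regarded as an element of the field `K` of rational
functions (the fraction field of `MvPolynomial (Fin n) 𝕜`). -/
def ratVar (𝕜 : Type*) [Field 𝕜] (n : ℕ) (K : Type*) [Field K]
    [Algebra (MvPolynomial (Fin n) 𝕜) K] (i : Fin n) : K :=
  algebraMap (MvPolynomial (Fin n) 𝕜) K (X i)

/-- The `𝕜`-linear operator `f ↦ s f - (f - s f) * c⁻¹`; with `s = sᵢ` and
`c = x_{i+1} - x_i` this is `Dᵢ⁻ = sᵢ − ∂ᵢ`, where `∂ᵢ f = (f - sᵢ f)/(x_{i+1} - x_i)`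
is the Demazure operator. -/
def demazureMinusAux (𝕜 : Type*) [Field 𝕜] (K : Type*) [Field K] [Algebra 𝕜 K]
    (s : K ≃ₐ[𝕜] K) (c : K) : Module.End 𝕜 K :=
  s.toLinearMap - (LinearMap.mulRight 𝕜 c⁻¹) ∘ₗ ((LinearMap.id : K →ₗ[𝕜] K) - s.toLinearMap)

/-- The operator `Dᵢ⁻ = sᵢ − ∂ᵢ` (with `0`-indexed variables, so `sᵢ` is induced by the
transposition of the variables `x i` and `x (i+1)`), built from a family `s` of
automorphisms of `K` indexed by permutations. -/
def DMinus (𝕜 : Type*) [Field 𝕜] {n : ℕ} (K : Type*) [Field K] [Algebra 𝕜 K]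
    [Algebra (MvPolynomial (Fin n) 𝕜) K]
    (s : Equiv.Perm (Fin n) → (K ≃ₐ[𝕜] K)) (i : ℕ) (hi : i + 1 < n) : Module.End 𝕜 K :=
  demazureMinusAux 𝕜 K (s (Equiv.swap ⟨i, Nat.lt_of_succ_lt hi⟩ ⟨i + 1, hi⟩))
    (ratVar 𝕜 n K ⟨i + 1, hi⟩ - ratVar 𝕜 n K ⟨i, Nat.lt_of_succ_lt hi⟩)

/-!
With `c = x_{i+1} - x_i` the operator is `Dᵢ⁻ = (1 + c⁻¹) sᵢ - c⁻¹`. Comparing coefficients in the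
braid relation for `sᵢ` and `sᵢ₊₁`, with `d = x_{i+2} - x_{i+1}`, leaves multiples of the
partial-fraction identity `1 / (c d) = (1 / c + 1 / d) / (c + d)`.

The unique action comes from the Coxeter presentation of the symmetric group. If `p₀, …, p_{n-1}`
satisfy the type `A` relations, put `P_k = p₀ ⋯ p_{k-1}` and let `σᵢ = (i, i+1)`. Then
`P_{σᵢ k} pᵢ P_k⁻¹` lies in the subgroup `H` generated by `p₁, …, p_{n-1}`, so the cosets
`H P_k` are permuted by the `pᵢ` as the points `k` are by the `σᵢ`. Hence an element whose
permutation fixes `0` lies in `H`, and by induction only the identity acts trivially.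
-/

section CoxeterRelations

variable {M : Type*} [Monoid M] {a b : M}

theorem mul_pow_two_eq_one_iff_commute (ha : a * a = 1) (hb : b * b = 1) :
    (a * b) ^ 2 = 1 ↔ Commute a b := by
  have hba : b * a * (a * b) = 1 := by rw [mul_assoc, ← mul_assoc a, ha, one_mul, hb]
  rw [pow_two]
  exact ⟨fun h => left_inv_eq_right_inv h (by rw [mul_assoc, ← mul_assoc b, hb, one_mul, ha]),
    fun h => by rw [← hba, h.eq]⟩

theorem mul_pow_three_eq_one_iff_braid (ha : a * a = 1) (hb : b * b = 1) :
    (a * b) ^ 3 = 1 ↔ a * b * a = b * a * b := by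
  have hbab : b * a * b * (b * a * b) = 1 := by
    rw [mul_assoc, ← mul_assoc b, ← mul_assoc b, hb, one_mul, mul_assoc, ← mul_assoc a, ha,
      one_mul, hb]
  have hpow : (a * b) ^ 3 = a * b * a * (b * a * b) := by
    simp only [pow_succ, pow_zero, one_mul, mul_assoc]
  rw [hpow]
  exact ⟨fun h => left_inv_eq_right_inv h hbab, fun h => by rw [h, hbab]⟩

theorem isLiftable_A_iff {n : ℕ} {f : Fin n → M} :
    (CoxeterMatrix.A n).IsLiftable f ↔
      (∀ i, f i * f i = 1) ∧ (∀ i j : Fin n, (i : ℕ) + 1 < j → Commute (f i) (f j)) ∧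
        ∀ i j : Fin n, (i : ℕ) + 1 = j → f i * f j * f i = f j * f i * f j := by
  have hfar : ∀ i j : Fin n, (i : ℕ) + 1 < j → CoxeterMatrix.A n i j = 2 := fun i j hij =>
    (if_neg (Fin.ne_of_val_ne (by omega))).trans (if_neg (by omega))
  have hnear : ∀ i j : Fin n, (i : ℕ) + 1 = j → CoxeterMatrix.A n i j = 3 := fun i j hij =>
    (if_neg (Fin.ne_of_val_ne (by omega))).trans (if_pos (Or.inr hij))
  refine ⟨fun hf => ?_, fun ⟨hsq, hcomm, hbraid⟩ i j => ?_⟩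
  · have hsq : ∀ i, f i * f i = 1 := fun i => by simpa using hf i i
    refine ⟨hsq, fun i j hij => ?_, fun i j hij => ?_⟩
    · rw [← mul_pow_two_eq_one_iff_commute (hsq i) (hsq j), ← hfar i j hij, hf]
    · rw [← mul_pow_three_eq_one_iff_braid (hsq i) (hsq j), ← hnear i j hij, hf]
  · rcases lt_trichotomy i j with hij | rfl | hij
    · rcases (show (i : ℕ) + 1 ≤ j from hij).lt_or_eq with h | h
      · rw [hfar i j h, mul_pow_two_eq_one_iff_commute (hsq i) (hsq j)]
        exact hcomm i j h
      · rw [hnear i j h, mul_pow_three_eq_one_iff_braid (hsq i) (hsq j), hbraid i j h]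
    · rw [CoxeterMatrix.diagonal, pow_one, hsq]
    · rw [CoxeterMatrix.symmetric]
      rcases (show (j : ℕ) + 1 ≤ i from hij).lt_or_eq with h | h
      · rw [hfar j i h, mul_pow_two_eq_one_iff_commute (hsq i) (hsq j)]
        exact (hcomm j i h).symm
      · rw [hnear j i h, mul_pow_three_eq_one_iff_braid (hsq i) (hsq j), hbraid j i h]

end CoxeterRelations

theorem swap_braid {α : Type*} [DecidableEq α] {a b c : α}
    (hab : a ≠ b) (hac : a ≠ c) (hbc : b ≠ c) :
    Equiv.swap a b * Equiv.swap b c * Equiv.swap a b =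
      Equiv.swap b c * Equiv.swap a b * Equiv.swap b c := by
  rw [Equiv.swap_mul_swap_mul_swap hab hac, Equiv.swap_comm a b, Equiv.swap_comm b c,
    Equiv.swap_mul_swap_mul_swap hbc.symm hac.symm, Equiv.swap_comm]

theorem isLiftable_A_swap (n : ℕ) :
    (CoxeterMatrix.A n).IsLiftable fun i : Fin n => Equiv.swap i.castSucc i.succ := by
  refine isLiftable_A_iff.2 ⟨fun i => Equiv.swap_mul_self _ _, fun i j hij => ?_, fun i j hij => ?_⟩
  · exact (Equiv.Perm.disjoint_swap_swap (by grind)).commute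
  · have hj : j.castSucc = i.succ := Fin.ext hij.symm
    rw [hj]
    apply swap_braid <;> simp only [ne_eq, Fin.ext_iff, Fin.val_castSucc, Fin.val_succ] <;> omega

section Prefixes

variable {M : Type*} [Monoid M] {n : ℕ}

theorem isLiftable_A_tail {p : Fin (n + 1) → M}
    (hp : (CoxeterMatrix.A (n + 1)).IsLiftable p) :
    (CoxeterMatrix.A n).IsLiftable (Fin.tail p) := by
  obtain ⟨hsq, hcomm, hbraid⟩ := isLiftable_A_iff.1 hp
  exact isLiftable_A_iff.2 ⟨fun i => hsq i.succ,
    fun i j hij => hcomm i.succ j.succ (Nat.succ_lt_succ hij),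
    fun i j hij => hbraid i.succ j.succ (congrArg Nat.succ hij)⟩

theorem commute_partialProd {p : Fin n → M} (hp : (CoxeterMatrix.A n).IsLiftable p) {i : Fin n}
    {k : Fin (n + 1)} (hk : (k : ℕ) < i) : Commute (Fin.partialProd p k) (p i) := by
  induction k using Fin.induction with
  | zero => simp
  | succ k ih =>
    rw [Fin.val_succ] at hk
    rw [Fin.partialProd_succ]
    exact (ih (Nat.lt_of_succ_lt hk)).mul_left ((isLiftable_A_iff.1 hp).2.1 k i hk)

theorem partialProd_mul_eq_mul_partialProd {p : Fin n → M}
    (hp : (CoxeterMatrix.A n).IsLiftable p) {i j : Fin n} (hij : (i : ℕ) + 1 = j)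
    {k : Fin (n + 1)} (hk : (j : ℕ) < k) :
    Fin.partialProd p k * p i = p j * Fin.partialProd p k := by
  obtain ⟨-, hcomm, hbraid⟩ := isLiftable_A_iff.1 hp
  induction k using Fin.induction with
  | zero => simp at hk
  | succ k ih =>
    rcases (Nat.lt_succ_iff.1 hk).lt_or_eq with hjk | hjk
    · rw [Fin.partialProd_succ, mul_assoc, ← (hcomm i k (by omega)).eq, ← mul_assoc, ih hjk,
        mul_assoc]
    · obtain rfl : j = k := Fin.ext hjk
      have hcast : j.castSucc = i.succ := Fin.ext hij.symm
      have hji : Commute (Fin.partialProd p i.castSucc) (p j) :=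
        commute_partialProd hp (by rw [Fin.val_castSucc]; omega)
      calc Fin.partialProd p j.succ * p i
          = Fin.partialProd p i.castSucc * (p i * p j * p i) := by
            rw [Fin.partialProd_succ, hcast, Fin.partialProd_succ]; simp only [mul_assoc]
        _ = Fin.partialProd p i.castSucc * p j * (p i * p j) := by
            rw [hbraid i j hij]; simp only [mul_assoc]
        _ = p j * Fin.partialProd p j.succ := by
            rw [hji.eq, Fin.partialProd_succ, hcast, Fin.partialProd_succ]; simp only [mul_assoc]

end Prefixes

section SymmetricGroup

variable {G : Type*} [Group G] {n : ℕ}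

theorem partialProd_swap_mul_mul_inv_mem {p : Fin (n + 1) → G}
    (hp : (CoxeterMatrix.A (n + 1)).IsLiftable p) (i : Fin (n + 1)) (k : Fin (n + 2)) :
    Fin.partialProd p (Equiv.swap i.castSucc i.succ k) * p i * (Fin.partialProd p k)⁻¹ ∈
      Submonoid.closure (Set.range (Fin.tail p)) := by
  have hsucc : ∀ j : Fin n, p j.succ ∈ Submonoid.closure (Set.range (Fin.tail p)) :=
    fun j => Submonoid.subset_closure ⟨j, rfl⟩
  rcases eq_or_ne k i.castSucc with rfl | hki
  · rw [Equiv.swap_apply_left, Fin.partialProd_succ, mul_assoc (Fin.partialProd p _),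
      (isLiftable_A_iff.1 hp).1 i, mul_one, mul_inv_cancel]
    exact one_mem _
  rcases eq_or_ne k i.succ with rfl | hki'
  · rw [Equiv.swap_apply_right, Fin.partialProd_succ, mul_inv_cancel]
    exact one_mem _
  rw [Equiv.swap_apply_of_ne_of_ne hki hki']
  rcases lt_or_gt_of_ne hki with hlt | hgt
  · rw [(commute_partialProd hp hlt).eq, mul_inv_cancel_right]
    have hi : i ≠ 0 := by rintro rfl; exact Fin.not_lt_zero k hlt
    rw [← Fin.succ_pred i hi]
    exact hsucc _
  · have hik : (i : ℕ) + 1 < k := by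
      have := Fin.val_ne_of_ne hki'
      simp only [Fin.lt_def, Fin.val_castSucc, Fin.val_succ] at hgt this
      omega
    have hin : (i : ℕ) < n := by omega
    rw [partialProd_mul_eq_mul_partialProd hp (j := Fin.succ ⟨i, hin⟩) rfl hik,
      mul_inv_cancel_right]
    exact hsucc _

theorem exists_partialProd_mul_mul_inv_mem {α : Type*} {p : Fin (n + 1) → G}
    (hp : (CoxeterMatrix.A (n + 1)).IsLiftable p) {π : G →* Equiv.Perm α} {e : Fin (n + 2) → α}
    (hπ : ∀ i k, π (p i) (e k) = e (Equiv.swap i.castSucc i.succ k)) {g : G}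
    (hg : g ∈ Submonoid.closure (Set.range p)) (k : Fin (n + 2)) :
    ∃ l, π g (e k) = e l ∧ Fin.partialProd p l * g * (Fin.partialProd p k)⁻¹ ∈
      Submonoid.closure (Set.range (Fin.tail p)) := by
  induction hg using Submonoid.closure_induction_left with
  | one => exact ⟨k, by rw [map_one, Equiv.Perm.one_apply], by simp⟩
  | mul_left _ hi g _ ih =>
    obtain ⟨i, rfl⟩ := hi
    obtain ⟨l, hl, hmem⟩ := ih
    refine ⟨Equiv.swap i.castSucc i.succ l, by rw [map_mul, Equiv.Perm.mul_apply, hl, hπ], ?_⟩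
    simpa only [mul_assoc, inv_mul_cancel_left] using
      mul_mem (partialProd_swap_mul_mul_inv_mem hp i l) hmem

theorem eq_one_of_forall_apply_eq {α : Type*} {p : Fin n → G}
    (hp : (CoxeterMatrix.A n).IsLiftable p) {π : G →* Equiv.Perm α} {e : Fin (n + 1) → α}
    (he : Function.Injective e)
    (hπ : ∀ i k, π (p i) (e k) = e (Equiv.swap i.castSucc i.succ k)) {g : G}
    (hg : g ∈ Submonoid.closure (Set.range p)) (hfix : ∀ k, π g (e k) = e k) : g = 1 := by
  induction n with
  | zero => simpa using hg
  | succ n ih =>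
    obtain ⟨l, hl, hmem⟩ := exists_partialProd_mul_mul_inv_mem hp hπ hg 0
    obtain rfl : l = 0 := he (hl.symm.trans (hfix 0))
    rw [Fin.partialProd_zero, one_mul, inv_one, mul_one] at hmem
    refine ih (isLiftable_A_tail hp) (he.comp (Fin.succ_injective _)) (fun i k => ?_) hmem
      fun k => hfix k.succ
    rw [Function.comp_apply, Function.comp_apply, (Fin.succ_injective _).map_swap]
    exact hπ i.succ k.succ

theorem bijective_of_map_simple_eq_swap (cs : CoxeterSystem (CoxeterMatrix.A n) G)
    {φ : G →* Equiv.Perm (Fin (n + 1))}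
    (hφ : ∀ i, φ (cs.simple i) = Equiv.swap i.castSucc i.succ) : Function.Bijective φ := by
  constructor
  · refine (injective_iff_map_eq_one φ).2 fun g hg => ?_
    exact eq_one_of_forall_apply_eq (π := φ) cs.simple_mul_simple_pow Function.injective_id
      (fun i k => DFunLike.congr_fun (hφ i) k)
      (cs.submonoid_closure_range_simple ▸ Submonoid.mem_top g) (DFunLike.congr_fun hg)
  · rw [← MonoidHom.mrange_eq_top, ← top_le_iff, ← Equiv.Perm.mclosure_swap_castSucc_succ,
      Submonoid.closure_le]
    rintro _ ⟨i, rfl⟩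
    exact ⟨cs.simple i, hφ i⟩

/-- The symmetric group on `n + 1` points as a Coxeter group of type `Aₙ`, the simple reflections
being the adjacent transpositions. -/
def permCoxeterSystem (n : ℕ) : CoxeterSystem (CoxeterMatrix.A n) (Equiv.Perm (Fin (n + 1))) :=
  (CoxeterMatrix.A n).toCoxeterSystem.map <| MulEquiv.ofBijective
    ((CoxeterMatrix.A n).toCoxeterSystem.lift ⟨_, isLiftable_A_swap n⟩)
    (bijective_of_map_simple_eq_swap _ (CoxeterSystem.lift_apply_simple _ (isLiftable_A_swap n)))

theorem permCoxeterSystem_simple (i : Fin n) :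
    (permCoxeterSystem n).simple i = Equiv.swap i.castSucc i.succ :=
  CoxeterSystem.lift_apply_simple _ (isLiftable_A_swap n) i

theorem existsUnique_perm_monoidHom {M : Type*} [Monoid M] {f : Fin n → M}
    (hf : (CoxeterMatrix.A n).IsLiftable f) :
    ∃! Φ : Equiv.Perm (Fin (n + 1)) →* M, ∀ i, Φ (Equiv.swap i.castSucc i.succ) = f i := by
  simp only [← permCoxeterSystem_simple]
  refine ⟨(permCoxeterSystem n).lift ⟨f, hf⟩, CoxeterSystem.lift_apply_simple _ hf, fun Ψ hΨ => ?_⟩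
  refine (permCoxeterSystem n).ext_simple fun i => ?_
  rw [hΨ, CoxeterSystem.lift_apply_simple _ hf]

theorem existsUnique_perm_fin_monoidHom {M : Type*} [Monoid M] {d : ∀ i, i + 1 < n → M}
    (hsq : ∀ i hi, d i hi * d i hi = 1)
    (hcomm : ∀ i j hi hj, i + 2 ≤ j → d i hi * d j hj = d j hj * d i hi)
    (hbraid : ∀ i hi hi',
      d i hi * d (i + 1) hi' * d i hi = d (i + 1) hi' * d i hi * d (i + 1) hi') :
    ∃! Φ : Equiv.Perm (Fin n) →* M, ∀ i (hi : i + 1 < n),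
      Φ (Equiv.swap ⟨i, Nat.lt_of_succ_lt hi⟩ ⟨i + 1, hi⟩) = d i hi := by
  cases n with
  | zero =>
    exact ⟨1, fun i hi => absurd hi i.succ.not_lt_zero, fun Ψ _ => MonoidHom.ext fun σ => by
      rw [Subsingleton.elim σ 1, map_one, map_one]⟩
  | succ n =>
    have hf : (CoxeterMatrix.A n).IsLiftable fun i : Fin n => d i (Nat.succ_lt_succ i.isLt) := by
      refine isLiftable_A_iff.2 ⟨fun i => hsq i _, fun i j => hcomm i j _ _, ?_⟩
      rintro i ⟨_, hj⟩ rfl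
      exact hbraid i _ (Nat.succ_lt_succ hj)
    refine (existsUnique_congr fun Φ => ?_).2 (existsUnique_perm_monoidHom hf)
    exact ⟨fun h i => h i (Nat.succ_lt_succ i.isLt),
      fun h i hi => h ⟨i, Nat.lt_of_succ_lt_succ hi⟩⟩

end SymmetricGroup

section Operators

variable {𝕜 K : Type*} [Field 𝕜] [Field K] [Algebra 𝕜 K] {s t : K ≃ₐ[𝕜] K} {c d : K}

theorem demazureMinusAux_apply (s : K ≃ₐ[𝕜] K) (c f : K) :
    demazureMinusAux 𝕜 K s c f = (1 + c⁻¹) * s f - c⁻¹ * f := by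
  simp only [demazureMinusAux, LinearMap.sub_apply, AlgEquiv.toLinearMap_apply,
    LinearMap.comp_apply, LinearMap.mulRight_apply, LinearMap.id_apply]
  ring

theorem demazureMinusAux_mul_self (hs : s * s = 1) (hc : s c = -c) :
    demazureMinusAux 𝕜 K s c * demazureMinusAux 𝕜 K s c = 1 := by
  have hss : ∀ f, s (s f) = f := DFunLike.congr_fun hs
  ext f
  simp only [Module.End.mul_apply, Module.End.one_apply, demazureMinusAux_apply, map_sub, map_add,
    map_mul, map_one, map_inv₀, hss, hc, inv_neg]
  ring

theorem demazureMinusAux_commute (hst : Commute s t) (hd : s d = d) (hc : t c = c) :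
    Commute (demazureMinusAux 𝕜 K s c) (demazureMinusAux 𝕜 K t d) := by
  have hst' : ∀ f, s (t f) = t (s f) := DFunLike.congr_fun hst.eq
  ext f
  simp only [Module.End.mul_apply, demazureMinusAux_apply, map_sub, map_add, map_mul, map_one,
    map_inv₀, hst', hd, hc]
  ring

theorem demazureMinusAux_braid (hs : s * s = 1) (ht : t * t = 1) (hst : s * t * s = t * s * t)
    (hc : c ≠ 0) (hsc : s c = -c) (hsd : s d = c + d) (htc : t c = c + d) (htd : t d = -d) :
    demazureMinusAux 𝕜 K s c * demazureMinusAux 𝕜 K t d * demazureMinusAux 𝕜 K s c =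
      demazureMinusAux 𝕜 K t d * demazureMinusAux 𝕜 K s c * demazureMinusAux 𝕜 K t d := by
  have hss : ∀ f, s (s f) = f := DFunLike.congr_fun hs
  have htt : ∀ f, t (t f) = f := DFunLike.congr_fun ht
  have hsts : ∀ f, s (t (s f)) = t (s (t f)) := DFunLike.congr_fun hst
  have hcd : c + d ≠ 0 := htc ▸ (map_ne_zero t).2 hc
  have hd : d ≠ 0 := (map_ne_zero s).1 (hsd ▸ hcd)
  have partial_fractions : c⁻¹ * d⁻¹ = (c⁻¹ + d⁻¹) * (c + d)⁻¹ := by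
    rw [inv_add_inv hc hd, div_mul_eq_mul_div, mul_inv_cancel₀ hcd, one_div, mul_inv]
  ext f
  simp only [Module.End.mul_apply, demazureMinusAux_apply, map_sub, map_add, map_mul, map_one,
    map_inv₀, inv_neg, hss, htt, hsts, hsc, hsd, htc, htd]
  linear_combination ((1 + c⁻¹) * s f - (1 + d⁻¹) * t f - (c⁻¹ - d⁻¹) * f) * partial_fractions

end Operators

section RationalFunctions

variable {𝕜 : Type*} [Field 𝕜] {n : ℕ} {K : Type*} [Field K]
  [Algebra (MvPolynomial (Fin n) 𝕜) K]

theorem ratVar_injective [IsFractionRing (MvPolynomial (Fin n) 𝕜) K] :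
    Function.Injective (ratVar 𝕜 n K) :=
  (IsFractionRing.injective (MvPolynomial (Fin n) 𝕜) K).comp (X_injective (R := 𝕜))

variable [Algebra 𝕜 K] {s : Equiv.Perm (Fin n) → (K ≃ₐ[𝕜] K)}

theorem map_swap_ratVar_sub
    (hs : ∀ σ i, s σ (ratVar 𝕜 n K i) = ratVar 𝕜 n K (σ i)) (i j : Fin n) :
    s (Equiv.swap i j) (ratVar 𝕜 n K j - ratVar 𝕜 n K i) =
      -(ratVar 𝕜 n K j - ratVar 𝕜 n K i) := by
  rw [map_sub, hs, hs, Equiv.swap_apply_left, Equiv.swap_apply_right, neg_sub]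

variable [IsScalarTower 𝕜 (MvPolynomial (Fin n) 𝕜) K] [IsFractionRing (MvPolynomial (Fin n) 𝕜) K]

theorem algEquiv_ext_ratVar {g h : K ≃ₐ[𝕜] K}
    (hgh : ∀ i, g (ratVar 𝕜 n K i) = h (ratVar 𝕜 n K i)) : g = h := by
  refine AlgEquiv.coe_toAlgHom_injective <|
    IsLocalization.algHom_ext (A := MvPolynomial (Fin n) 𝕜) (nonZeroDivisors _) ?_
  exact MvPolynomial.algHom_ext hgh

theorem map_mul_of_forall_ratVar
    (hs : ∀ σ i, s σ (ratVar 𝕜 n K i) = ratVar 𝕜 n K (σ i))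
    (σ τ : Equiv.Perm (Fin n)) : s (σ * τ) = s σ * s τ :=
  algEquiv_ext_ratVar (n := n) fun i => by
    rw [hs, AlgEquiv.mul_apply, hs, hs, Equiv.Perm.mul_apply]

theorem map_swap_mul_self
    (hs : ∀ σ i, s σ (ratVar 𝕜 n K i) = ratVar 𝕜 n K (σ i)) (i j : Fin n) :
    s (Equiv.swap i j) * s (Equiv.swap i j) = 1 :=
  algEquiv_ext_ratVar (n := n) fun k => by
    rw [AlgEquiv.mul_apply, hs, hs, Equiv.swap_apply_self, AlgEquiv.one_apply]

theorem DMinus_mul_self (hs : ∀ σ i, s σ (ratVar 𝕜 n K i) = ratVar 𝕜 n K (σ i))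
    (i : ℕ) (hi : i + 1 < n) : DMinus 𝕜 K s i hi * DMinus 𝕜 K s i hi = 1 :=
  demazureMinusAux_mul_self (map_swap_mul_self hs _ _) (map_swap_ratVar_sub hs _ _)

theorem DMinus_commute (hs : ∀ σ i, s σ (ratVar 𝕜 n K i) = ratVar 𝕜 n K (σ i))
    {i j : ℕ} (hij : i + 2 ≤ j) (hi : i + 1 < n) (hj : j + 1 < n) :
    Commute (DMinus 𝕜 K s i hi) (DMinus 𝕜 K s j hj) := by
  refine demazureMinusAux_commute ?_ ?_ ?_
  · rw [commute_iff_eq, ← map_mul_of_forall_ratVar hs, ← map_mul_of_forall_ratVar hs,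
      (Equiv.Perm.disjoint_swap_swap (by grind)).commute.eq]
  all_goals
    rw [map_sub, hs, hs, Equiv.swap_apply_of_ne_of_ne, Equiv.swap_apply_of_ne_of_ne] <;>
      simp only [ne_eq, Fin.mk.injEq] <;> omega

theorem DMinus_braid (hs : ∀ σ i, s σ (ratVar 𝕜 n K i) = ratVar 𝕜 n K (σ i))
    (i : ℕ) (hi : i + 1 < n) (hi' : i + 2 < n) :
    DMinus 𝕜 K s i hi * DMinus 𝕜 K s (i + 1) hi' * DMinus 𝕜 K s i hi =
      DMinus 𝕜 K s (i + 1) hi' * DMinus 𝕜 K s i hi * DMinus 𝕜 K s (i + 1) hi' := by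
  have hab : (⟨i, Nat.lt_of_succ_lt hi⟩ : Fin n) ≠ ⟨i + 1, hi⟩ := by simp
  have hac : (⟨i, Nat.lt_of_succ_lt hi⟩ : Fin n) ≠ ⟨i + 1 + 1, hi'⟩ := by
    simp only [ne_eq, Fin.mk.injEq]; omega
  have hbc : (⟨i + 1, hi⟩ : Fin n) ≠ ⟨i + 1 + 1, hi'⟩ := by simp
  refine demazureMinusAux_braid (map_swap_mul_self hs _ _) (map_swap_mul_self hs _ _) ?_
    (sub_ne_zero.2 (ratVar_injective.ne hab.symm)) (map_swap_ratVar_sub hs _ _) ?_ ?_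
    (map_swap_ratVar_sub hs _ _)
  · simp only [← map_mul_of_forall_ratVar hs, swap_braid hab hac hbc]
  · rw [map_sub, hs, hs, Equiv.swap_apply_right, Equiv.swap_apply_of_ne_of_ne hac.symm hbc.symm]
    ring
  · rw [map_sub, hs, hs, Equiv.swap_apply_left, Equiv.swap_apply_of_ne_of_ne hab hac]
    ring

end RationalFunctions

theorem DMinus_coxeter_relations_and_unique_action_general
    (𝕜 : Type*) [Field 𝕜] (n : ℕ)
    (K : Type*) [Field K] [Algebra 𝕜 K] [Algebra (MvPolynomial (Fin n) 𝕜) K]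
    [IsScalarTower 𝕜 (MvPolynomial (Fin n) 𝕜) K]
    [IsFractionRing (MvPolynomial (Fin n) 𝕜) K]
    (s : Equiv.Perm (Fin n) → (K ≃ₐ[𝕜] K))
    (hs : ∀ (σ : Equiv.Perm (Fin n)) (i : Fin n), s σ (ratVar 𝕜 n K i) = ratVar 𝕜 n K (σ i)) :
    (∀ (i : ℕ) (hi : i + 1 < n), DMinus 𝕜 K s i hi * DMinus 𝕜 K s i hi = 1) ∧
    (∀ (i j : ℕ) (hi : i + 1 < n) (hj : j + 1 < n), i + 2 ≤ j ∨ j + 2 ≤ i →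
      DMinus 𝕜 K s i hi * DMinus 𝕜 K s j hj = DMinus 𝕜 K s j hj * DMinus 𝕜 K s i hi) ∧
    (∀ (i : ℕ) (hi : i + 1 < n) (hi' : i + 2 < n),
      DMinus 𝕜 K s i hi * DMinus 𝕜 K s (i + 1) hi' * DMinus 𝕜 K s i hi =
        DMinus 𝕜 K s (i + 1) hi' * DMinus 𝕜 K s i hi * DMinus 𝕜 K s (i + 1) hi') ∧
    (∃! Φ : Equiv.Perm (Fin n) →* Module.End 𝕜 K,
      ∀ (i : ℕ) (hi : i + 1 < n),
        Φ (Equiv.swap ⟨i, Nat.lt_of_succ_lt hi⟩ ⟨i + 1, hi⟩) = DMinus 𝕜 K s i hi) := by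
  refine ⟨DMinus_mul_self hs, fun i j hi hj hij => ?_, DMinus_braid hs, ?_⟩
  · exact hij.elim (fun h => DMinus_commute hs h hi hj) fun h => (DMinus_commute hs h hj hi).symm
  · exact existsUnique_perm_fin_monoidHom (DMinus_mul_self hs)
      (fun i j hi hj hij => DMinus_commute hs hij hi hj) (DMinus_braid hs)

/-- The operators `D₁⁻, …, D_{n−1}⁻` on `K = 𝕜(x₁,…,xₙ)` satisfy the
Coxeter relations of the symmetric group `Sₙ`, and consequently there is a unique action
of `Sₙ` on `K` by `𝕜`-linear maps in which the simple transposition `(i, i+1)` acts as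
`Dᵢ⁻` (the `⊖`-action).  Here `s` is the permutation action of `Sₙ` on `K` (characterized
by `hs`), from which the `Dᵢ⁻` are built. -/
theorem DMinus_coxeter_relations_and_unique_action
    (𝕜 : Type*) [Field 𝕜] [CharZero 𝕜] (n : ℕ) (hn : 1 ≤ n)
    (K : Type*) [Field K] [Algebra 𝕜 K] [Algebra (MvPolynomial (Fin n) 𝕜) K]
    [IsScalarTower 𝕜 (MvPolynomial (Fin n) 𝕜) K]
    [IsFractionRing (MvPolynomial (Fin n) 𝕜) K]
    (s : Equiv.Perm (Fin n) → (K ≃ₐ[𝕜] K))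
    (hs : ∀ (σ : Equiv.Perm (Fin n)) (i : Fin n), s σ (ratVar 𝕜 n K i) = ratVar 𝕜 n K (σ i)) :
    (∀ (i : ℕ) (hi : i + 1 < n), DMinus 𝕜 K s i hi * DMinus 𝕜 K s i hi = 1) ∧
    (∀ (i j : ℕ) (hi : i + 1 < n) (hj : j + 1 < n), i + 2 ≤ j ∨ j + 2 ≤ i →
      DMinus 𝕜 K s i hi * DMinus 𝕜 K s j hj = DMinus 𝕜 K s j hj * DMinus 𝕜 K s i hi) ∧
    (∀ (i : ℕ) (hi : i + 2 < n),
      DMinus 𝕜 K s i (by omega) * DMinus 𝕜 K s (i + 1) hi * DMinus 𝕜 K s i (by omega) =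
        DMinus 𝕜 K s (i + 1) hi * DMinus 𝕜 K s i (by omega) * DMinus 𝕜 K s (i + 1) hi) ∧
    (∃! Φ : Equiv.Perm (Fin n) →* Module.End 𝕜 K,
      ∀ (i : ℕ) (hi : i + 1 < n),
        Φ (Equiv.swap ⟨i, Nat.lt_of_succ_lt hi⟩ ⟨i + 1, hi⟩) = DMinus 𝕜 K s i hi) :=
  have ⟨hsq, hcomm, hbraid, hΦ⟩ := DMinus_coxeter_relations_and_unique_action_general 𝕜 n K s hs
  ⟨hsq, hcomm, fun i hi => hbraid i _ hi, hΦ⟩
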